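/- Let h ≥ 1 and let φ(x_1,…,x_h,y) = u_1x_1 + ⋯ + u_hx_h + vy be a linear form with nonzero integer coefficients u_1,…,u_h and v ≥ 1, and set ψ(x_1,…,x_h) = u_1x_1 + ⋯ + u_hx_h. Let 𝒜 = (A_1,…,A_h) be an h-tuple of nonempty finite sets of integers with |A_i| > 1 for at least one i, let B be a set of integers, and let t ≥ 1 be an integer such that (𝒜,B) is t-complementing with respect to φ. Let g_min = min(ψ(𝒜)), g_max = max(ψ(𝒜)), and d = ⌊(g_max − g_min)/v⌋. If m is a positive integer and j is an integer such that χ_B(n) = χ_B(n + m) for all n ∈ {j, j+1, …, j+d−1}, then χ_B(n) = χ_B(n + m) for all integers n. -/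

import Mathlib

/-- The representation function associated to the linear form
`φ(x₁,…,x_h,y) = u₁x₁ + ⋯ + u_h x_h + v y`. -/
noncomputable def repFn {h : ℕ} (u : Fin h → ℤ) (v : ℤ) (A : Fin h → Finset ℤ)
    (B : Set ℤ) (n : ℤ) : ℕ∞ :=
  {p : (Fin h → ℤ) × ℤ |
    (∀ i, p.1 i ∈ A i) ∧ p.2 ∈ B ∧ (∑ i, u i * p.1 i) + v * p.2 = n}.encard

open Classical in
theorem repFn_eq_card {h : ℕ} (u : Fin h → ℤ) (v : ℤ) (hv : 1 ≤ v)
    (A : Fin h → Finset ℤ) (B : Set ℤ) (n : ℤ) :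
    repFn u v A B n = (((Fintype.piFinset A).filter
      fun a => ∃ b ∈ B, (∑ i, u i * a i) + v * b = n).card : ℕ∞) := by
  unfold repFn
  rw [← Set.encard_coe_eq_coe_finsetCard]
  have hinj : Set.InjOn (Prod.fst : (Fin h → ℤ) × ℤ → (Fin h → ℤ)) {p : (Fin h → ℤ) × ℤ |
    (∀ i, p.1 i ∈ A i) ∧ p.2 ∈ B ∧ (∑ i, u i * p.1 i) + v * p.2 = n} := by
    rintro ⟨a, b⟩ ⟨_, _, h1⟩ ⟨a', b'⟩ ⟨_, _, h2⟩ hab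
    simp only at hab h1 h2
    subst hab
    have h3 : v * b = v * b' := by linarith
    have h4 := mul_left_cancel₀ (by omega : v ≠ 0) h3
    rw [h4]
  rw [← hinj.encard_image]
  congr 1
  ext a
  simp only [Set.mem_image, Set.mem_setOf_eq, Finset.coe_filter, Fintype.mem_piFinset]
  constructor
  · rintro ⟨⟨a', b⟩, ⟨h1, h2, h3⟩, rfl⟩
    exact ⟨h1, b, h2, h3⟩
  · rintro ⟨h1, b, h2, h3⟩
    exact ⟨(a, b), ⟨h1, h2, h3⟩, rfl⟩

theorem step_key {h : ℕ} (u : Fin h → ℤ) (v : ℤ) (hv : 1 ≤ v)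
    (A : Fin h → Finset ℤ) (B : Set ℤ) (t : ℕ)
    (hcomp : ∀ n : ℤ, repFn u v A B n = t) (m : ℤ) (b g0 : ℤ)
    (hg0 : ∃ a ∈ Fintype.piFinset A, ∑ i, u i * a i = g0)
    (hoth : ∀ a ∈ Fintype.piFinset A, ∑ i, u i * a i ≠ g0 → ∀ b' : ℤ,
      (∑ i, u i * a i) + v * b' = g0 + v * b → (b' ∈ B ↔ b' + m ∈ B)) :
    b ∈ B ↔ b + m ∈ B := by
  classical
  have hv0 : v ≠ 0 := by omega
  have hc : ((Fintype.piFinset A).filter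
      fun a => ∃ b' ∈ B, (∑ i, u i * a i) + v * b' = g0 + v * b).card =
      ((Fintype.piFinset A).filter
      fun a => ∃ b' ∈ B, (∑ i, u i * a i) + v * b' = g0 + v * (b + m)).card := by
    have h1 := hcomp (g0 + v * b)
    have h2 := hcomp (g0 + v * (b + m))
    rw [repFn_eq_card u v hv] at h1 h2
    exact_mod_cast h1.trans h2.symm
  have hin : ∀ (a : Fin h → ℤ) (x : ℤ), ∑ i, u i * a i = g0 →
      ((∃ b' ∈ B, (∑ i, u i * a i) + v * b' = g0 + v * x) ↔ x ∈ B) := by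
    intro a x ha
    constructor
    · rintro ⟨b', hb', e⟩
      have : v * b' = v * x := by linarith
      rwa [← mul_left_cancel₀ hv0 this]
    · intro hx
      exact ⟨x, hx, by rw [ha]⟩
  have hout : ∀ a ∈ Fintype.piFinset A, ∑ i, u i * a i ≠ g0 →
      ((∃ b' ∈ B, (∑ i, u i * a i) + v * b' = g0 + v * b) ↔
        ∃ b' ∈ B, (∑ i, u i * a i) + v * b' = g0 + v * (b + m)) := by
    intro a ha hne
    constructor
    · rintro ⟨b', hb', e⟩
      exact ⟨b' + m, (hoth a ha hne b' e).1 hb', by linarith⟩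
    · rintro ⟨b', hb', e⟩
      have e' : (∑ i, u i * a i) + v * (b' - m) = g0 + v * b := by linarith
      exact ⟨b' - m, (hoth a ha hne _ e').2 (by simpa using hb'), e'⟩
  obtain ⟨a0, ha0, hga0⟩ := hg0
  by_contra hcon
  have hcases : (b ∈ B ∧ b + m ∉ B) ∨ (b ∉ B ∧ b + m ∈ B) := by tauto
  rcases hcases with ⟨h1, h2⟩ | ⟨h1, h2⟩
  · refine absurd hc (ne_of_gt (Finset.card_lt_card ?_))
    rw [Finset.ssubset_iff_of_subset]
    · refine ⟨a0, ?_, ?_⟩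
      · rw [Finset.mem_filter, hin a0 _ hga0]; exact ⟨ha0, h1⟩
      · rw [Finset.mem_filter, hin a0 _ hga0]; exact fun hh => h2 hh.2
    · intro a ha
      rw [Finset.mem_filter] at ha ⊢
      by_cases hg : ∑ i, u i * a i = g0
      · rw [hin a _ hg] at ha; exact absurd ha.2 h2
      · exact ⟨ha.1, (hout a ha.1 hg).2 ha.2⟩
  · refine absurd hc (ne_of_lt (Finset.card_lt_card ?_))
    rw [Finset.ssubset_iff_of_subset]
    · refine ⟨a0, ?_, ?_⟩
      · rw [Finset.mem_filter, hin a0 _ hga0]; exact ⟨ha0, h2⟩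
      · rw [Finset.mem_filter, hin a0 _ hga0]; exact fun hh => h1 hh.2
    · intro a ha
      rw [Finset.mem_filter] at ha ⊢
      by_cases hg : ∑ i, u i * a i = g0
      · rw [hin a _ hg] at ha; exact absurd ha.2 h1
      · exact ⟨ha.1, (hout a ha.1 hg).1 ha.2⟩

theorem stmt8 {h : ℕ} (hh : 1 ≤ h) (u : Fin h → ℤ) (v : ℤ)
    (hu : ∀ i, u i ≠ 0) (hv : 1 ≤ v)
    (A : Fin h → Finset ℤ) (hA : ∀ i, (A i).Nonempty) (hA1 : ∃ i, 1 < (A i).card)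
    (B : Set ℤ) (t : ℕ) (ht : 1 ≤ t)
    (hcomp : ∀ n : ℤ, repFn u v A B n = t)
    (S : Finset ℤ) (hS : S = (Fintype.piFinset A).image fun a => ∑ i, u i * a i)
    (hne : S.Nonempty)
    (gmin gmax : ℤ) (hgmin : gmin = S.min' hne) (hgmax : gmax = S.max' hne)
    (d : ℕ) (hd : d = ((gmax - gmin) / v).toNat)
    (m : ℕ) (hm : 0 < m) (j : ℤ)
    (hper : ∀ n : ℤ, j ≤ n → n < j + d → (n ∈ B ↔ n + m ∈ B)) :
    ∀ n : ℤ, n ∈ B ↔ n + m ∈ B := by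
  have hmemS : ∀ a ∈ Fintype.piFinset A, ∑ i, u i * a i ∈ S := by
    intro a ha
    rw [hS]
    exact Finset.mem_image_of_mem (fun a : Fin h → ℤ => ∑ i, u i * a i) ha
  have hlo : ∀ g ∈ S, gmin ≤ g := fun g hg => hgmin ▸ S.min'_le g hg
  have hhi : ∀ g ∈ S, g ≤ gmax := fun g hg => hgmax ▸ S.le_max' g hg
  have hminS : gmin ∈ S := hgmin ▸ S.min'_mem hne
  have hmaxS : gmax ∈ S := hgmax ▸ S.max'_mem hne
  have hmin' : ∃ a ∈ Fintype.piFinset A, ∑ i, u i * a i = gmin := by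
    rw [hS] at hminS; simpa only [Finset.mem_image] using hminS
  have hmax' : ∃ a ∈ Fintype.piFinset A, ∑ i, u i * a i = gmax := by
    rw [hS] at hmaxS; simpa only [Finset.mem_image] using hmaxS
  have hdle : ∀ k : ℤ, v * k ≤ gmax - gmin → k ≤ d := by
    intro k hk
    have h1 : k ≤ (gmax - gmin) / v := by
      rw [Int.le_ediv_iff_mul_le (by omega)]
      linarith [mul_comm v k]
    omega
  have fwd : ∀ b : ℤ, (∀ n, b - d ≤ n → n < b → (n ∈ B ↔ n + m ∈ B)) →
      (b ∈ B ↔ b + m ∈ B) := by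
    intro b hb
    refine step_key u v hv A B t hcomp m b gmin hmin' ?_
    intro a ha hne' b' e
    have h1 := hlo _ (hmemS a ha)
    have h2 := hhi _ (hmemS a ha)
    have h3 : gmin < ∑ i, u i * a i := lt_of_le_of_ne h1 (Ne.symm hne')
    have h4 := hdle (b - b') (by linarith [mul_sub v b b'])
    refine hb b' (by omega) ?_
    by_contra hcon
    nlinarith
  have bwd : ∀ b : ℤ, (∀ n, b < n → n ≤ b + d → (n ∈ B ↔ n + m ∈ B)) →
      (b ∈ B ↔ b + m ∈ B) := by
    intro b hb
    refine step_key u v hv A B t hcomp m b gmax hmax' ?_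
    intro a ha hne' b' e
    have h1 := hlo _ (hmemS a ha)
    have h2 := hhi _ (hmemS a ha)
    have h3 : ∑ i, u i * a i < gmax := lt_of_le_of_ne h2 hne'
    have h4 := hdle (b' - b) (by linarith [mul_sub v b' b])
    refine hb b' ?_ (by omega)
    by_contra hcon
    nlinarith
  have H : ∀ k : ℕ, ∀ n : ℤ, j - k ≤ n → n < j + d + k → (n ∈ B ↔ n + m ∈ B) := by
    intro k
    induction k with
    | zero => intro n h1 h2; exact hper n (by simpa using h1) (by simpa using h2)
    | succ k ih =>
      intro n h1 h2
      push_cast at h1 h2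
      by_cases c1 : n < j - k
      · exact bwd n fun n' h3 h4 => ih n' (by omega) (by omega)
      · by_cases c2 : n < j + d + k
        · exact ih n (by omega) c2
        · exact fwd n fun n' h3 h4 => ih n' (by omega) (by omega)
  intro n
  exact H ((n - j).natAbs + 1) n (by omega) (by omega)
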